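/- arXiv:1905.08140 — 2 statements merged into one kernel-verified Lean document; each statement's English description precedes it below -/
import Mathlib

section
/- The Toda lattice derivations pairwise commute: for all j, k ≥ 0, D_j ∘ D_k = D_k ∘ D_j as derivations of the ring 𝒜. -/
open MvPolynomial

noncomputable section

/-- The ring 𝒜 = ℤ[v_i, w_i : i ∈ ℤ], with variables indexed by ℤ ⊕ ℤ
(`Sum.inl i` is `v_i`, `Sum.inr i` is `w_i`). -/
abbrev 𝒜 : Type := MvPolynomial (ℤ ⊕ ℤ) ℤ

/-- The variable v_i. -/
def vV (i : ℤ) : 𝒜 := X (Sum.inl i)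
/-- The variable w_i. -/
def wV (i : ℤ) : 𝒜 := X (Sum.inr i)

/-- The shift operator Λ, as a ring (ℤ-algebra) automorphism of 𝒜, with
Λ(v_i) = v_{i+1}, Λ(w_i) = w_{i+1}. -/
def Λs : 𝒜 ≃ₐ[ℤ] 𝒜 :=
  MvPolynomial.renameEquiv ℤ (Equiv.sumCongr (Equiv.addRight (1 : ℤ)) (Equiv.addRight (1 : ℤ)))

/-- Integer powers Λ^k of the shift automorphism. -/
def Λz (k : ℤ) : 𝒜 ≃ₐ[ℤ] 𝒜 := Λs ^ k

/-- The identity difference operator, as its family of coefficients (coefficient of Λ^m). -/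
def oneOp : ℤ → 𝒜 := fun m => if m = 0 then 1 else 0

/-- Left multiplication by L = Λ + v_0 + w_0 Λ^{-1} on difference operators,
written in terms of coefficients: `(L·P)_m = Λ(P_{m-1}) + v_0 P_m + w_0 Λ^{-1}(P_{m+1})`. -/
def mulL (P : ℤ → 𝒜) : ℤ → 𝒜 := fun m => Λs (P (m - 1)) + vV 0 * P m + wV 0 * Λs.symm (P (m + 1))

/-- The coefficients of the difference operator L^k. -/
def Lpow (k : ℕ) : ℤ → 𝒜 := mulL^[k] oneOp

/-- The nonnegative part P_+ of a difference operator. -/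
def plusPart (P : ℤ → 𝒜) : ℤ → 𝒜 := fun m => if 0 ≤ m then P m else 0

/-- Right multiplication by L on difference operators:
`(P·L)_m = P_{m-1} + P_m Λ^m(v_0) + P_{m+1} Λ^{m+1}(w_0)`. -/
def mulRL (P : ℤ → 𝒜) : ℤ → 𝒜 := fun m =>
  P (m - 1) + P m * Λz m (vV 0) + P (m + 1) * Λz (m + 1) (wV 0)

/-- The coefficients of the commutator [A_k, L] = A_k L - L A_k, where A_k = (L^{k+1})_+. -/
def brkt (k : ℕ) : ℤ → 𝒜 := fun m =>
  mulRL (plusPart (Lpow (k + 1))) m - mulL (plusPart (Lpow (k + 1))) m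

/-- The k-th Toda lattice derivation D_k : the unique admissible derivation of 𝒜
(i.e. derivation commuting with Λ) with D_k(v_0) = Coef([A_k,L],0),
D_k(w_0) = Coef([A_k,L],-1); hence D_k(v_i) = Λ^i(Coef([A_k,L],0)) and
D_k(w_i) = Λ^i(Coef([A_k,L],-1)). -/
def Dtoda (k : ℕ) : Derivation ℤ 𝒜 𝒜 :=
  MvPolynomial.mkDerivation ℤ (fun s => match s with
    | Sum.inl i => Λz i (brkt k 0)
    | Sum.inr i => Λz i (brkt k (-1)))

/-!
In the ring of difference operators, `A_k = (L ^ (k + 1))₊`, and the coefficients of `L` evolve by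
the Lax equation `D_k L = ⁅A_k, L⁆`, hence `D_k (L ^ n) = ⁅A_k, L ^ n⁆`. The projection `P ↦ P₊`
splits the ring into two subrings, which amounts to the Rota–Baxter identity
`⁅a₊, b₊⁆ = (⁅a₊, b⁆ + ⁅a, b₊⁆ - ⁅a, b⁆)₊`. For the commuting elements `a = L ^ (j + 1)` and
`b = L ^ (k + 1)` its right-hand side is `(D_j b - D_k a)₊ = D_j A_k - D_k A_j`: this is the
zero-curvature equation, and by the Jacobi identity it makes `D_j` and `D_k` commute on `L`. The
coefficients of `L` and their shifts generate `𝒜`, and the derivations commute with the shift.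
-/

section LaxFlows

variable {K 𝔤 : Type*} [CommRing K] [LieRing 𝔤] [LieAlgebra K 𝔤]

/-- Rota–Baxter operators of weight `-1` on a Lie algebra. The weight is normalised so that the
projection onto a Lie subalgebra along a complementary Lie subalgebra is such an operator. -/
def IsRotaBaxter (π : 𝔤 →ₗ[K] 𝔤) : Prop :=
  ∀ a b, ⁅π a, π b⁆ = π (⁅π a, b⁆ + ⁅a, π b⁆ - ⁅a, b⁆)

namespace IsRotaBaxter

theorem zero_curvature {π : 𝔤 →ₗ[K] 𝔤} (hπ : IsRotaBaxter π) {d e : 𝔤 → 𝔤}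
    (hdπ : Function.Commute d π) (heπ : Function.Commute e π) {a b : 𝔤} (hab : ⁅a, b⁆ = 0)
    (hdb : d b = ⁅π a, b⁆) (hea : e a = ⁅π b, a⁆) :
    d (π b) - e (π a) = ⁅π a, π b⁆ := by
  rw [hdπ.eq, heπ.eq, hdb, hea, ← lie_skew (π b) a, map_neg, sub_neg_eq_add, ← map_add, hπ, hab,
    sub_zero]

theorem lax_flows_commute {π : 𝔤 →ₗ[K] 𝔤} (hπ : IsRotaBaxter π) {d e : LieDerivation K 𝔤 𝔤}
    (hdπ : Function.Commute d π) (heπ : Function.Commute e π) {a b x : 𝔤} (hab : ⁅a, b⁆ = 0)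
    (hdb : d b = ⁅π a, b⁆) (hea : e a = ⁅π b, a⁆) (hdx : d x = ⁅π a, x⁆) (hex : e x = ⁅π b, x⁆) :
    d (e x) = e (d x) := by
  have hcurv : d (π b) = e (π a) + ⁅π a, π b⁆ :=
    sub_eq_iff_eq_add'.mp (hπ.zero_curvature hdπ heπ hab hdb hea)
  calc d (e x) = ⁅π b, ⁅π a, x⁆⁆ + ⁅e (π a) + ⁅π a, π b⁆, x⁆ := by
        rw [hex, LieDerivation.apply_lie_eq_add, hdx, hcurv]
    _ = ⁅π a, ⁅π b, x⁆⁆ + ⁅e (π a), x⁆ := by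
        rw [add_lie, lie_lie]
        abel
    _ = e (d x) := by
        rw [hdx, LieDerivation.apply_lie_eq_add, hex]

end IsRotaBaxter

attribute [local instance] LieRing.ofAssociativeRing

theorem IsRotaBaxter.of_mul {R : Type*} [Ring R] [Algebra K R] {π : R →ₗ[K] R}
    (h : ∀ a b, π a * π b = π (π a * b + a * π b - a * b)) : IsRotaBaxter π := fun a b => by
  rw [LieRing.of_associative_ring_bracket, h, h, ← map_sub]
  simp only [LieRing.of_associative_ring_bracket]
  congr 1
  abel

end LaxFlows

theorem map_pow_eq_lie_of_leibniz {R : Type*} [Ring R] {d : R → R}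
    (hd : ∀ a b, d (a * b) = d a * b + a * d b) {a x : R} (h : d x = ⁅a, x⁆) (n : ℕ) :
    d (x ^ n) = ⁅a, x ^ n⁆ := by
  induction n with
  | zero =>
    have hone : d 1 = d 1 + d 1 := by simpa only [mul_one, one_mul] using hd 1 1
    simpa [LieRing.of_associative_ring_bracket] using hone
  | succ n ih =>
    rw [pow_succ, hd, ih, h]
    simp only [LieRing.of_associative_ring_bracket]
    noncomm_ring

section SkewMonoidAlgebra

open SkewMonoidAlgebra (single)

attribute [local instance] LieRing.ofAssociativeRing

variable {K A G : Type*}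

theorem skewMonoidAlgebra_induction₂ [Monoid G] [Semiring A]
    {p : SkewMonoidAlgebra A G → SkewMonoidAlgebra A G → Prop} (P Q : SkewMonoidAlgebra A G)
    (single_single : ∀ g a h b, p (single g a) (single h b))
    (add_left : ∀ P P' Q, p P Q → p P' Q → p (P + P') Q)
    (add_right : ∀ P Q Q', p P Q → p P Q' → p P (Q + Q')) : p P Q := by
  induction P with
  | single g a =>
    induction Q with
    | single h b => exact single_single g a h b
    | add Q Q' hQ hQ' => exact add_right _ Q Q' hQ hQ'
  | add P P' hP hP' => exact add_left P P' _ hP hP'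

section Truncation

variable [Semiring K] [AddCommMonoid A] [Module K A]

variable (K A) in
open Classical in
/-- The truncation of an element of a skew monoid algebra to a set `s` of exponents, which discards
the coefficients outside `s`. For the nonnegative powers of `Λ` this is `P ↦ P₊`. -/
def truncation (s : Set G) : SkewMonoidAlgebra A G →ₗ[K] SkewMonoidAlgebra A G where
  toFun P := ⟨P.coeff.filter (· ∈ s)⟩
  map_add' P Q := by simp [Finsupp.filter_add]
  map_smul' c P := by simp [Finsupp.filter_smul]

open Classical in
theorem coeff_truncation (s : Set G) (P : SkewMonoidAlgebra A G) (g : G) :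
    (truncation K A s P).coeff g = if g ∈ s then P.coeff g else 0 :=
  Finsupp.filter_apply _ _ _

open Classical in
theorem truncation_single_of_mem {s : Set G} {g : G} (hg : g ∈ s) (a : A) :
    truncation K A s (single g a) = single g a :=
  congrArg SkewMonoidAlgebra.ofCoeff (Finsupp.filter_single_of_pos _ hg)

open Classical in
theorem truncation_single_of_notMem {s : Set G} {g : G} (hg : g ∉ s) (a : A) :
    truncation K A s (single g a) = 0 :=
  congrArg SkewMonoidAlgebra.ofCoeff (Finsupp.filter_single_of_neg _ hg)

end Truncation

theorem isRotaBaxter_truncation [CommRing K] [Ring A] [Algebra K A] [Monoid G]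
    [MulSemiringAction G A] [SMulCommClass G K A] {s : Set G}
    (hs : ∀ g ∈ s, ∀ h ∈ s, g * h ∈ s) (hsc : ∀ g ∉ s, ∀ h ∉ s, g * h ∉ s) :
    IsRotaBaxter (truncation K A s) := by
  refine .of_mul fun P Q => ?_
  induction P, Q using skewMonoidAlgebra_induction₂ with
  | single_single g a h b =>
    by_cases hg : g ∈ s <;> by_cases hh : h ∈ s
    · simp [truncation_single_of_mem, hg, hh, hs, SkewMonoidAlgebra.single_mul_single]
    · simp [truncation_single_of_mem, truncation_single_of_notMem, hg, hh]
    · simp [truncation_single_of_mem, truncation_single_of_notMem, hg, hh]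
    · simp [truncation_single_of_notMem, hg, hh, hsc, SkewMonoidAlgebra.single_mul_single]
  | add_left P P' Q hP hP' =>
    rw [map_add, add_mul, hP, hP', ← map_add]
    congr 1
    noncomm_ring
  | add_right P Q Q' hQ hQ' =>
    rw [map_add, mul_add, hQ, hQ', ← map_add]
    congr 1
    noncomm_ring

section Coeffwise

variable [CommRing K] [CommRing A] [Algebra K A]

/-- The extension of a derivation of `A` to a skew monoid algebra over `A`, acting on each
coefficient. -/
def coeffwise (D : Derivation K A A) : SkewMonoidAlgebra A G →ₗ[K] SkewMonoidAlgebra A G where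
  toFun P := ⟨P.coeff.mapRange D (map_zero D)⟩
  map_add' P Q := by ext; simp
  map_smul' c P := by ext; simp

theorem coeff_coeffwise (D : Derivation K A A) (P : SkewMonoidAlgebra A G) (g : G) :
    (coeffwise D P).coeff g = D (P.coeff g) :=
  rfl

theorem coeffwise_single (D : Derivation K A A) (g : G) (a : A) :
    coeffwise D (single g a) = single g (D a) :=
  congrArg SkewMonoidAlgebra.ofCoeff Finsupp.mapRange_single

theorem coeffwise_commute_truncation (D : Derivation K A A) (s : Set G) :
    Function.Commute (coeffwise D) (truncation K A s) := fun P => by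
  ext g
  simp only [coeff_coeffwise, coeff_truncation, apply_ite D, map_zero]

variable [Monoid G] [MulSemiringAction G A] {D : Derivation K A A}

theorem coeffwise_mul (hD : ∀ (g : G) (a : A), D (g • a) = g • D a)
    (P Q : SkewMonoidAlgebra A G) :
    coeffwise D (P * Q) = coeffwise D P * Q + P * coeffwise D Q := by
  induction P, Q using skewMonoidAlgebra_induction₂ with
  | single_single g a h b =>
    simp only [SkewMonoidAlgebra.single_mul_single, coeffwise_single, Derivation.leibniz, hD,
      smul_eq_mul, ← SkewMonoidAlgebra.single_add]
    congr 1
    ring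
  | add_left P P' Q hP hP' =>
    simp only [add_mul, map_add, hP, hP']
    abel
  | add_right P Q Q' hQ hQ' =>
    simp only [mul_add, map_add, hQ, hQ']
    abel

/-- `coeffwise D` as a derivation of the commutator bracket, available when `D` commutes with the
action of `G` on the coefficients. -/
def coeffwiseLieDerivation [SMulCommClass G K A] (hD : ∀ (g : G) (a : A), D (g • a) = g • D a) :
    LieDerivation K (SkewMonoidAlgebra A G) (SkewMonoidAlgebra A G) where
  toLinearMap := coeffwise D
  leibniz' P Q := by
    simp only [LieRing.of_associative_ring_bracket, map_sub, coeffwise_mul hD]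
    abel

theorem coeffwise_lax_flows_commute [SMulCommClass G K A] {E : Derivation K A A}
    (hD : ∀ (g : G) (a : A), D (g • a) = g • D a) (hE : ∀ (g : G) (a : A), E (g • a) = g • E a)
    {s : Set G} (hs : ∀ g ∈ s, ∀ h ∈ s, g * h ∈ s) (hsc : ∀ g ∉ s, ∀ h ∉ s, g * h ∉ s)
    {x : SkewMonoidAlgebra A G} {m n : ℕ} (hDx : coeffwise D x = ⁅truncation K A s (x ^ m), x⁆)
    (hEx : coeffwise E x = ⁅truncation K A s (x ^ n), x⁆) :
    coeffwise D (coeffwise E x) = coeffwise E (coeffwise D x) :=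
  (isRotaBaxter_truncation hs hsc).lax_flows_commute
    (d := coeffwiseLieDerivation hD) (e := coeffwiseLieDerivation hE)
    (coeffwise_commute_truncation D s) (coeffwise_commute_truncation E s)
    (Commute.pow_pow_self x m n).lie_eq
    (map_pow_eq_lie_of_leibniz (coeffwise_mul hD) hDx n)
    (map_pow_eq_lie_of_leibniz (coeffwise_mul hE) hEx m) hDx hEx

end Coeffwise

end SkewMonoidAlgebra

theorem derivation_map_comm_of_X {σ R : Type*} [CommSemiring R]
    (D : Derivation R (MvPolynomial σ R) (MvPolynomial σ R))
    (f : MvPolynomial σ R →ₐ[R] MvPolynomial σ R) (h : ∀ i, D (f (X i)) = f (D (X i)))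
    (p : MvPolynomial σ R) : D (f p) = f (D p) := by
  induction p using MvPolynomial.induction_on with
  | C r => rw [← algebraMap_eq, AlgHom.commutes, Derivation.map_algebraMap, map_zero]
  | add p q hp hq => simp only [map_add, hp, hq]
  | mul_X p i hp => simp only [map_mul, Derivation.leibniz, hp, h, map_add, smul_eq_mul]

section Shift

theorem Λz_zero (a : 𝒜) : Λz 0 a = a := rfl

theorem Λz_one (a : 𝒜) : Λz 1 a = Λs a := by rw [Λz, zpow_one]

theorem Λz_neg_one (a : 𝒜) : Λz (-1) a = Λs.symm a := by rw [Λz, zpow_neg_one]; rfl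

theorem Λz_add (m n : ℤ) (a : 𝒜) : Λz (m + n) a = Λz m (Λz n a) := by
  rw [Λz, zpow_add]; rfl

theorem Λs_X (s : ℤ ⊕ ℤ) : Λs (X s) = X (s.map (· + 1) (· + 1)) :=
  rename_X _ _

theorem Λz_X (m : ℤ) (s : ℤ ⊕ ℤ) : Λz m (X s) = X (s.map (· + m) (· + m)) := by
  induction m using Int.induction_on with
  | zero => cases s <;> simp [Λz_zero]
  | succ m ih => rw [add_comm, Λz_add, ih, Λz_one, Λs_X]; cases s <;> simp [add_assoc, add_comm]
  | pred m ih =>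
    rw [sub_eq_neg_add, Λz_add, ih, Λz_neg_one, AlgEquiv.symm_apply_eq, Λs_X]
    cases s <;> simp [add_comm, add_left_comm]

theorem Dtoda_Λz (k : ℕ) (m : ℤ) (a : 𝒜) : Dtoda k (Λz m a) = Λz m (Dtoda k a) := by
  refine derivation_map_comm_of_X (Dtoda k) (Λz m) (fun s => ?_) a
  change Dtoda k (Λz m (X s)) = Λz m (Dtoda k (X s))
  cases s <;> simp [Λz_X, Dtoda, mkDerivation_X, add_comm, Λz_add]

/-- The action of `ℤ` on `𝒜` through powers of `Λ`, written multiplicatively so that it twists the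
product of a skew monoid algebra. -/
instance shiftAction : MulSemiringAction (Multiplicative ℤ) 𝒜 :=
  MulSemiringAction.compHom 𝒜 (zpowersHom (𝒜 ≃ₐ[ℤ] 𝒜) Λs)

theorem smul_eq_Λz (g : Multiplicative ℤ) (a : 𝒜) : g • a = Λz g.toAdd a := rfl

instance : SMulCommClass (Multiplicative ℤ) ℤ 𝒜 where
  smul_comm g c a := map_smul (Λz g.toAdd) c a

end Shift

/-- The ring of difference operators `∑ P_m Λ^m` with finitely many nonzero terms; the exponent `m`
is written `Multiplicative.ofAdd m`. -/
abbrev DiffOp : Type := SkewMonoidAlgebra 𝒜 (Multiplicative ℤ)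

namespace DiffOp

open SkewMonoidAlgebra (single)

open Multiplicative (ofAdd)

/-- The coefficient `Coef(P, m)` of `Λ^m` in `P`. -/
def coef (P : DiffOp) (m : ℤ) : 𝒜 := P.coeff (ofAdd m)

theorem ext_coef {P Q : DiffOp} (h : coef P = coef Q) : P = Q :=
  SkewMonoidAlgebra.ext fun g => congrFun h g.toAdd

theorem coef_add (P Q : DiffOp) (m : ℤ) : coef (P + Q) m = coef P m + coef Q m := by
  simp [coef]

theorem coef_sub (P Q : DiffOp) (m : ℤ) : coef (P - Q) m = coef P m - coef Q m := by
  simp [coef, SkewMonoidAlgebra.coeff_sub]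

theorem coef_single (n : ℤ) (a : 𝒜) (m : ℤ) :
    coef (single (ofAdd n) a) m = if n = m then a else 0 := by
  simp [coef, Finsupp.single_apply]

theorem coef_single_mul (n : ℤ) (a : 𝒜) (P : DiffOp) (m : ℤ) :
    coef (single (ofAdd n) a * P) m = a * Λz n (coef P (m - n)) := by
  rw [coef, SkewMonoidAlgebra.coeff_single_mul, smul_eq_Λz, ← ofAdd_neg, ← ofAdd_add,
    neg_add_eq_sub]
  rfl

theorem coef_mul_single (n : ℤ) (a : 𝒜) (P : DiffOp) (m : ℤ) :
    coef (P * single (ofAdd n) a) m = coef P (m - n) * Λz (m - n) a := by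
  rw [coef, SkewMonoidAlgebra.coeff_mul_single, smul_eq_Λz, ← ofAdd_neg, ← ofAdd_add,
    ← sub_eq_add_neg]
  rfl

theorem coef_coeffwise (D : Derivation ℤ 𝒜 𝒜) (P : DiffOp) (m : ℤ) :
    coef (coeffwise D P) m = D (coef P m) :=
  rfl

theorem coef_truncation_Ici_one (P : DiffOp) :
    coef (truncation ℤ 𝒜 (Set.Ici 1) P) = plusPart (coef P) := by
  funext m
  simp only [coef, coeff_truncation, plusPart, Set.mem_Ici, ← ofAdd_zero, Multiplicative.ofAdd_le]

/-- The Lax operator `L = Λ + v_0 + w_0 Λ^{-1}` of the Toda lattice. -/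
def lax : DiffOp := single (ofAdd 1) 1 + single (ofAdd 0) (vV 0) + single (ofAdd (-1)) (wV 0)

theorem coef_lax (m : ℤ) :
    coef lax m = (if 1 = m then 1 else 0) + (if 0 = m then vV 0 else 0) +
      (if -1 = m then wV 0 else 0) := by
  simp only [lax, coef_add, coef_single]

theorem coef_lax_mul (P : DiffOp) : coef (lax * P) = mulL (coef P) := by
  funext m
  simp only [lax, add_mul, coef_add, coef_single_mul, mulL, Λz_one, Λz_zero, Λz_neg_one, one_mul,
    sub_zero, sub_neg_eq_add]

theorem coef_mul_lax (P : DiffOp) : coef (P * lax) = mulRL (coef P) := by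
  funext m
  simp only [lax, mul_add, coef_add, coef_mul_single, mulRL, map_one, mul_one, sub_zero,
    sub_neg_eq_add]

theorem coef_lax_pow (n : ℕ) : coef (lax ^ n) = Lpow n := by
  induction n with
  | zero =>
    funext m
    rw [pow_zero, SkewMonoidAlgebra.one_def, ← ofAdd_zero, coef_single]
    simp only [Lpow, Function.iterate_zero, id, oneOp, eq_comm]
  | succ n ih => rw [pow_succ', coef_lax_mul, ih, Lpow, Lpow, Function.iterate_succ_apply']

theorem coef_lie_lax (k : ℕ) :
    coef ⁅truncation ℤ 𝒜 (Set.Ici 1) (lax ^ (k + 1)), lax⁆ = brkt k := by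
  funext m
  rw [LieRing.of_associative_ring_bracket, coef_sub, coef_mul_lax, coef_lax_mul,
    coef_truncation_Ici_one, coef_lax_pow, brkt]

end DiffOp

open DiffOp

theorem mulRL_Lpow (n : ℕ) : mulRL (Lpow n) = mulL (Lpow n) := by
  rw [← coef_lax_pow, ← coef_mul_lax, ← coef_lax_mul, ← pow_succ, pow_succ']

theorem brkt_of_lt_neg_one (k : ℕ) {m : ℤ} (hm : m < -1) : brkt k m = 0 := by
  have h₁ : ¬ 0 ≤ m - 1 := by lia
  have h₂ : ¬ 0 ≤ m := by lia
  have h₃ : ¬ 0 ≤ m + 1 := by lia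
  simp only [brkt, mulRL, mulL, plusPart, if_neg h₁, if_neg h₂, if_neg h₃, map_zero, zero_mul,
    mul_zero, add_zero, sub_zero]

-- In positive degree `⁅P₊, L⁆` only involves coefficients of `P` that `P₊` keeps, and `P = L ^ n`
-- commutes with `L`.
theorem brkt_of_pos (k : ℕ) {m : ℤ} (hm : 0 < m) : brkt k m = 0 := by
  have h₁ : 0 ≤ m - 1 := by lia
  have h₂ : 0 ≤ m := by lia
  have h₃ : 0 ≤ m + 1 := by lia
  have hcomm := congrFun (mulRL_Lpow (k + 1)) m
  simpa only [brkt, mulRL, mulL, plusPart, if_pos h₁, if_pos h₂, if_pos h₃, sub_eq_zero] using hcomm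

theorem Dtoda_vV_zero (k : ℕ) : Dtoda k (vV 0) = brkt k 0 :=
  mkDerivation_X _ _ _

theorem Dtoda_wV_zero (k : ℕ) : Dtoda k (wV 0) = brkt k (-1) :=
  mkDerivation_X _ _ _

theorem coeffwise_Dtoda_lax (k : ℕ) :
    coeffwise (Dtoda k) lax = ⁅truncation ℤ 𝒜 (Set.Ici 1) (lax ^ (k + 1)), lax⁆ := by
  refine ext_coef (funext fun m => ?_)
  rw [coef_lie_lax, coef_coeffwise, coef_lax]
  obtain hm | rfl | rfl | hm : m < -1 ∨ m = -1 ∨ m = 0 ∨ 0 < m := by lia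
  · simp [brkt_of_lt_neg_one k hm, show 1 ≠ m by lia, show 0 ≠ m by lia, show -1 ≠ m by lia]
  · simp [Dtoda_wV_zero]
  · simp [Dtoda_vV_zero]
  · simp [brkt_of_pos k hm, show 0 ≠ m by lia, show -1 ≠ m by lia, apply_ite (Dtoda k)]

theorem coeffwise_Dtoda_comm_lax (j k : ℕ) :
    coeffwise (Dtoda j) (coeffwise (Dtoda k) lax) =
      coeffwise (Dtoda k) (coeffwise (Dtoda j) lax) :=
  coeffwise_lax_flows_commute (fun g => Dtoda_Λz j g.toAdd) (fun g => Dtoda_Λz k g.toAdd)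
    (fun _ hg _ hh => one_le_mul hg hh)
    (fun _ hg _ hh => not_le.mpr (mul_lt_one (not_le.mp hg) (not_le.mp hh)))
    (coeffwise_Dtoda_lax j) (coeffwise_Dtoda_lax k)

theorem Dtoda_comm_Λz_coef_lax (j k : ℕ) (i m : ℤ) :
    Dtoda j (Dtoda k (Λz i (coef lax m))) = Dtoda k (Dtoda j (Λz i (coef lax m))) := by
  simp only [Dtoda_Λz, ← coef_coeffwise, coeffwise_Dtoda_comm_lax j k]

theorem X_inl_eq_Λz_coef_lax (i : ℤ) : X (Sum.inl i) = Λz i (coef lax 0) := by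
  simp [coef_lax, vV, Λz_X]

theorem X_inr_eq_Λz_coef_lax (i : ℤ) : X (Sum.inr i) = Λz i (coef lax (-1)) := by
  simp [coef_lax, wV, Λz_X]

/-- The Toda lattice derivations pairwise commute:
for all j, k ≥ 0, D_j ∘ D_k = D_k ∘ D_j as derivations of the ring 𝒜. -/
theorem toda_derivations_commute (j k : ℕ) (x : 𝒜) :
    Dtoda j (Dtoda k x) = Dtoda k (Dtoda j x) := by
  suffices h : ⁅Dtoda j, Dtoda k⁆ = 0 by
    rw [← sub_eq_zero, ← Derivation.commutator_apply, h, Derivation.zero_apply]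
  refine derivation_ext fun s => ?_
  rw [Derivation.commutator_apply, Derivation.zero_apply, sub_eq_zero]
  rcases s with i | i
  · rw [X_inl_eq_Λz_coef_lax, Dtoda_comm_Λz_coef_lax]
  · rw [X_inr_eq_Λz_coef_lax, Dtoda_comm_Λz_coef_lax]

end
end

section
/- For every integer j ≥ 0, the following identity of polynomials in n holds: (n/(j+1)) Σ_{j₁=0}^{j+1} ((−1)^{j₁}/2) C(j+1, j₁) C(n + 2j₁ − 1, 2j+1) + Σ_{j₁=0}^{j} (−1)^{j₁} C(j, j₁) C(n + 2j₁, 2j+1) = 0, where C(x, m) := x(x−1)⋯(x−m+1)/m! denotes the binomial coefficient as a polynomial in x. -/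
set_option synthInstance.maxHeartbeats 1000000
set_option maxHeartbeats 1000000

noncomputable section

open Polynomial

/-- The binomial coefficient C(p, m) = p (p-1) ⋯ (p-m+1) / m! of a polynomial
argument p, as a polynomial (in ℚ[n]). -/
def binomPoly (p : Polynomial ℚ) (m : ℕ) : Polynomial ℚ :=
  Polynomial.C ((m.factorial : ℚ)⁻¹) * ∏ t ∈ Finset.range m, (p - (t : ℚ) • 1)

/-!
Write `T` for the power series variable. The alternating sum
`∑ i, (-1)^i C(j, i) C(r + 2i, k + j)` is the coefficient of `T^(k + j)` in
`(1 + T)^r (1 - (1 + T)^2)^j`. Since `1 - (1 + T)^2 = -T (2 + T)`, it is `(-1)^j` times the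
coefficient of `T^k` in `(1 + T)^r (2 + T)^j`. Both sums of the identity have this form, and the
identity then says that the derivative of the Laurent series `(1 + T)^n ((2 + T) / T)^(j + 1)` has
residue zero.
-/

section PowerSeriesCoeff

open scoped PowerSeries

variable {R : Type*} [CommRing R]

/-- The difference of the two sides is the residue of the derivative of the Laurent series
`f * ((a + X) / X) ^ (j + 1)`. -/
theorem coeff_derivative_mul_C_add_X_pow_succ (f : R⟦X⟧) (a : R) (j : ℕ) :
    PowerSeries.coeff j
        (PowerSeries.derivative R f * (PowerSeries.C a + PowerSeries.X) ^ (j + 1)) =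
      (j + 1) * a * PowerSeries.coeff (j + 1) (f * (PowerSeries.C a + PowerSeries.X) ^ j) := by
  set g : R⟦X⟧ := PowerSeries.C a + PowerSeries.X with hg
  have derivative_eq : PowerSeries.derivative R (f * g ^ (j + 1)) =
      PowerSeries.derivative R f * g ^ (j + 1) + PowerSeries.C (j + 1 : R) * (f * g ^ j) := by
    have hg' : PowerSeries.derivative R g = 1 := by simp [hg]
    rw [Derivation.leibniz, PowerSeries.derivative_pow, hg']
    simp only [smul_eq_mul, map_add, map_natCast, map_one, Nat.cast_add, Nat.cast_one,
      Nat.add_sub_cancel]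
    ring
  have expand : f * g ^ (j + 1) = PowerSeries.C a * (f * g ^ j) + f * g ^ j * PowerSeries.X := by
    rw [hg]; ring
  have coeff_eq := PowerSeries.coeff_derivative (f * g ^ (j + 1)) j
  rw [derivative_eq, expand] at coeff_eq
  simp only [(PowerSeries.coeff _).map_add, PowerSeries.coeff_C_mul,
    PowerSeries.coeff_succ_mul_X] at coeff_eq
  linear_combination coeff_eq

theorem alternating_sum_choose_mul_coeff_mul_pow (f g : R⟦X⟧) (j n : ℕ) :
    ∑ i ∈ Finset.range (j + 1),
        (-1) ^ i * (j.choose i : R) * PowerSeries.coeff n (f * g ^ i) =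
      PowerSeries.coeff n (f * (1 - g) ^ j) := by
  rw [sub_eq_neg_add, add_pow, Finset.mul_sum, map_sum]
  refine Finset.sum_congr rfl fun i _ => ?_
  rw [← PowerSeries.coeff_C_mul]
  congr 1
  simp only [map_mul, map_pow, map_neg, map_one, map_natCast, one_pow, neg_pow g]
  ring

end PowerSeriesCoeff

section BinomialRing

variable {R : Type*} [CommRing R] [BinomialRing R]

theorem derivative_binomialSeries {A : Type*} [CommRing A] [Algebra R A] (r : R) :
    PowerSeries.derivative A (PowerSeries.binomialSeries A r) =
      r • PowerSeries.binomialSeries A (r - 1) := by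
  ext n
  have absorption : ((n : R) + 1) * Ring.choose r (n + 1) = r * Ring.choose (r - 1) n := by
    simpa using Ring.choose_add_smul_choose (r - 1) n 1
  simp only [PowerSeries.coeff_derivative, PowerSeries.coeff_smul,
    PowerSeries.binomialSeries_coeff, smul_smul, ← absorption]
  simp [Algebra.smul_def, mul_comm]

theorem alternating_sum_choose_mul_choose_add_two_mul (r : R) (j k : ℕ) :
    ∑ i ∈ Finset.range (j + 1),
        (-1) ^ i * (j.choose i : R) * Ring.choose (r + 2 * i) (k + j) =
      (-1) ^ j * PowerSeries.coeff k
        (PowerSeries.binomialSeries R r * (PowerSeries.C 2 + PowerSeries.X) ^ j) := by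
  have choose_eq_coeff (i : ℕ) : Ring.choose (r + 2 * i) (k + j) = PowerSeries.coeff (k + j)
      (PowerSeries.binomialSeries R r * ((1 + PowerSeries.X) ^ 2) ^ i) := by
    rw [← pow_mul, ← PowerSeries.binomialSeries_nat (R := R), ← PowerSeries.binomialSeries_add,
      PowerSeries.binomialSeries_coeff, smul_eq_mul, mul_one, Nat.cast_mul, Nat.cast_ofNat]
  have factor : PowerSeries.binomialSeries R r * (1 - (1 + PowerSeries.X) ^ 2) ^ j =
      PowerSeries.C ((-1) ^ j) *
        (PowerSeries.binomialSeries R r * (PowerSeries.C 2 + PowerSeries.X) ^ j) *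
        PowerSeries.X ^ j := by
    have square : (1 - (1 + PowerSeries.X) ^ 2 : PowerSeries R) =
        -1 * (PowerSeries.C 2 + PowerSeries.X) * PowerSeries.X := by
      rw [map_ofNat]; ring
    rw [square, mul_pow, mul_pow, map_pow, map_neg, map_one]
    ring
  simp_rw [choose_eq_coeff]
  rw [alternating_sum_choose_mul_coeff_mul_pow, factor, PowerSeries.coeff_mul_X_pow,
    PowerSeries.coeff_C_mul]

theorem gue_binomial_identity_general (r : R) (j : ℕ) :
    r * ∑ i ∈ Finset.range (j + 2),
        (-1) ^ i * ((j + 1).choose i : R) * Ring.choose (r + 2 * i - 1) (2 * j + 1) +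
      2 * (j + 1) * ∑ i ∈ Finset.range (j + 1),
        (-1) ^ i * (j.choose i : R) * Ring.choose (r + 2 * i) (2 * j + 1) = 0 := by
  have first_sum := alternating_sum_choose_mul_choose_add_two_mul (r - 1) (j + 1) j
  have second_sum := alternating_sum_choose_mul_choose_add_two_mul r j (j + 1)
  have residue_eq := coeff_derivative_mul_C_add_X_pow_succ (PowerSeries.binomialSeries R r) 2 j
  rw [derivative_binomialSeries, smul_mul_assoc, PowerSeries.coeff_smul] at residue_eq
  rw [show j + (j + 1) = 2 * j + 1 by ring] at first_sum
  rw [show j + 1 + j = 2 * j + 1 by ring] at second_sum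
  simp_rw [add_sub_right_comm]
  rw [first_sum, second_sum]
  linear_combination -(-1) ^ j * residue_eq

end BinomialRing

theorem binomPoly_eq_choose (p : ℚ[X]) (m : ℕ) : binomPoly p m = Ring.choose p m := by
  have prod_eq : ∏ t ∈ Finset.range m, (p - (t : ℚ) • 1) =
      (m.factorial : ℚ[X]) * Ring.choose p m := by
    rw [← nsmul_eq_mul, ← Ring.descPochhammer_eq_factorial_smul_choose, ← aeval_eq_smeval,
      ← eval_map_algebraMap, descPochhammer_map, descPochhammer_eval_eq_prod_range]
    simp [smul_eq_C_mul]
  have factorial_ne_zero : (m.factorial : ℚ) ≠ 0 := mod_cast m.factorial_ne_zero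
  rw [binomPoly, prod_eq, ← mul_assoc, ← C_eq_natCast, ← C_mul,
    inv_mul_cancel₀ factorial_ne_zero, C_1, one_mul]

/-- For every integer j ≥ 0, the identity
(n/(j+1)) Σ_{j₁=0}^{j+1} ((-1)^{j₁}/2) C(j+1, j₁) C(n + 2j₁ - 1, 2j+1)
 + Σ_{j₁=0}^{j} (-1)^{j₁} C(j, j₁) C(n + 2j₁, 2j+1) = 0
holds in the polynomial ring ℚ[n], where C(x, m) = x(x-1)⋯(x-m+1)/m!. -/
theorem gue_binomial_identity (j : ℕ) :
    Polynomial.C ((j + 1 : ℚ)⁻¹) * Polynomial.X *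
      (∑ j₁ ∈ Finset.range (j + 2),
        Polynomial.C ((-1 : ℚ) ^ j₁ / 2 * ((j + 1).choose j₁ : ℚ)) *
          binomPoly (Polynomial.X + Polynomial.C (2 * (j₁ : ℚ) - 1)) (2 * j + 1)) +
    (∑ j₁ ∈ Finset.range (j + 1),
        Polynomial.C ((-1 : ℚ) ^ j₁ * (j.choose j₁ : ℚ)) *
          binomPoly (Polynomial.X + Polynomial.C (2 * (j₁ : ℚ))) (2 * j + 1)) = 0 := by
  have general := gue_binomial_identity_general (X : ℚ[X]) j
  have scalar_eq_one : C (j + 1 : ℚ)⁻¹ * C 2⁻¹ * (2 * (j + 1) : ℚ[X]) = 1 := by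
    rw [← C_ofNat, ← C_eq_natCast, ← C_1, ← C_add, ← C_mul, ← C_mul, ← C_mul]
    congr 1
    field_simp
  simp_rw [div_eq_inv_mul, C_mul, mul_assoc, ← Finset.mul_sum]
  simp only [binomPoly_eq_choose, map_sub, map_mul, map_pow, map_neg, map_one, map_ofNat,
    map_natCast, ← add_sub_assoc, mul_assoc] at general ⊢
  generalize (Finset.range (j + 1)).sum (M := ℚ[X]) _ = S at general ⊢
  linear_combination C (j + 1 : ℚ)⁻¹ * C 2⁻¹ * general - S * scalar_eq_one

end
end
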